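/- Let A be a simple cusp algebra of codimension n + 1 (i.e., cod(A) = n + 1), and let π and χ be two primitives for A satisfying π̂(2k) = 0 and χ̂(2k) = 0 for all 2 ≤ k ≤ n. Then π − χ vanishes to order at least 2n + 2 at 0; equivalently, π̂(k) = χ̂(k) for all 0 ≤ k ≤ 2n + 1. -/

import Mathlib

/-!
The orders of vanishing at `0` of the elements of `A` are closed under addition, and a primitive
has order `2`. If some `f ∈ A` has odd order `2j + 1`, then the powers of `π` together with the
products `π ^ i * f` realise every order except possibly `1, 3, …, 2j - 1`. Since `A` contains
some `z^m O(𝔻)`, successive cancellation of leading terms shows that `O(𝔻)` is spanned by `A` and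
`z, z^3, …, z^(2j-1)`, so that `cod A ≤ j` (`cod_le_of_odd`). When `cod A = n + 1`, no element of
`A` therefore has odd order at most `2n + 1`.

The difference `π - χ` lies in `A`, and its even Taylor coefficients up to degree `2n` vanish, so
neither an even nor an odd number below `2n + 2` can be its order of vanishing.
-/

open scoped Classical

noncomputable section

/-- The open unit disk in `ℂ`. -/
def 𝔻 : Set ℂ := Metric.ball 0 1

lemma zero_mem_disk : (0 : ℂ) ∈ 𝔻 := Metric.mem_ball_self one_pos

/-- The origin, as a point of the disk. -/
def d0 : 𝔻 := ⟨0, zero_mem_disk⟩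

/-- A function on the disk is holomorphic if it agrees on `𝔻` with a function
that is (complex) differentiable on `𝔻`. -/
def IsHolo (f : 𝔻 → ℂ) : Prop :=
  ∃ F : ℂ → ℂ, DifferentiableOn ℂ F 𝔻 ∧ ∀ z : 𝔻, f z = F z

/-- `O(𝔻)`: the algebra of all holomorphic functions on the disk. -/
def HolDisk : Subalgebra ℂ (𝔻 → ℂ) where
  carrier := {f | IsHolo f}
  mul_mem' := by
    rintro f g ⟨F, hF, hf⟩ ⟨G, hG, hg⟩
    exact ⟨F * G, hF.mul hG, fun z => by simp [hf z, hg z]⟩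
  add_mem' := by
    rintro f g ⟨F, hF, hf⟩ ⟨G, hG, hg⟩
    exact ⟨F + G, hF.add hG, fun z => by simp [hf z, hg z]⟩
  one_mem' := ⟨fun _ => 1, differentiableOn_const 1, fun _ => rfl⟩
  zero_mem' := ⟨fun _ => 0, differentiableOn_const 0, fun _ => rfl⟩
  algebraMap_mem' := fun c => ⟨fun _ => c, differentiableOn_const c, fun _ => rfl⟩

/-- The `j`-th complex derivative of a holomorphic function on the disk, at a
point `a` (junk value `0` for non-holomorphic functions).  This is well defined
on `𝔻` since any two extensions agree on the open set `𝔻`. -/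
def der (j : ℕ) (a : ℂ) (f : 𝔻 → ℂ) : ℂ :=
  if h : IsHolo f then iteratedDeriv j h.choose a else 0

/-- The `k`-th Taylor coefficient at `0` of a holomorphic function on the disk. -/
def taylorCoeff (k : ℕ) (f : 𝔻 → ℂ) : ℂ := der k 0 f / (Nat.factorial k : ℂ)

/-- The coordinate function `z` on the disk. -/
def zfun : 𝔻 → ℂ := fun z => (z : ℂ)

/-- `z^m O(𝔻)`, as a subspace of functions on the disk. -/
def zO (m : ℕ) : Submodule ℂ (𝔻 → ℂ) where
  carrier := {f | ∃ g, IsHolo g ∧ f = zfun ^ m * g}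
  add_mem' := by
    rintro f₁ f₂ ⟨g₁, hg₁, rfl⟩ ⟨g₂, hg₂, rfl⟩
    exact ⟨g₁ + g₂, add_mem (show g₁ ∈ HolDisk from hg₁) (show g₂ ∈ HolDisk from hg₂),
      by ring⟩
  zero_mem' := ⟨0, (HolDisk : Subalgebra ℂ (𝔻 → ℂ)).zero_mem, by simp⟩
  smul_mem' := by
    rintro c f ⟨g, hg, rfl⟩
    exact ⟨c • g, SMulMemClass.smul_mem c (show g ∈ HolDisk from hg), by
      ext z; simp [zfun]; ring⟩

/-- The quotient vector space `O(𝔻)/A`. -/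
abbrev OmodA (A : Subalgebra ℂ (𝔻 → ℂ)) :=
  HolDisk.toSubmodule ⧸ (A.toSubmodule.comap HolDisk.toSubmodule.subtype)

/-- `cod(A) = dim O(𝔻)/A`. -/
def cod (A : Subalgebra ℂ (𝔻 → ℂ)) : ℕ := Module.finrank ℂ (OmodA A)

/-- `ord(A) = min {k : z^{k+1} O(𝔻) ⊆ A}`. -/
def ord (A : Subalgebra ℂ (𝔻 → ℂ)) : ℕ :=
  sInf {k : ℕ | (zO (k + 1) : Set (𝔻 → ℂ)) ⊆ (A : Set (𝔻 → ℂ))}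

/-- `con(A) = max {n : f⁽ʲ⁾(0) = 0 for all f ∈ A and all 1 ≤ j ≤ n}`. -/
def con (A : Subalgebra ℂ (𝔻 → ℂ)) : ℕ :=
  sSup {n : ℕ | ∀ f ∈ A, ∀ j, 1 ≤ j → j ≤ n → der j 0 f = 0}

/-- A cusp algebra: a unital subalgebra of `O(𝔻)` of finite codimension
containing `z^m O(𝔻)` for some `m ≥ 2`. -/
def IsCuspAlgebra (A : Subalgebra ℂ (𝔻 → ℂ)) : Prop :=
  A ≤ HolDisk ∧ FiniteDimensional ℂ (OmodA A) ∧
    ∃ m, 2 ≤ m ∧ (zO m : Set (𝔻 → ℂ)) ⊆ (A : Set (𝔻 → ℂ))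

/-- A simple cusp algebra: a cusp algebra of contact one. -/
def IsSimpleCuspAlgebra (A : Subalgebra ℂ (𝔻 → ℂ)) : Prop :=
  IsCuspAlgebra A ∧ con A = 1

/-- A primitive for a simple cusp algebra:  `π ∈ A` with `π(0) = 0`,
`π'(0) = 0`, `π''(0) = 2`. -/
def IsPrimitive (A : Subalgebra ℂ (𝔻 → ℂ)) (π : 𝔻 → ℂ) : Prop :=
  π ∈ A ∧ π d0 = 0 ∧ der 1 0 π = 0 ∧ der 2 0 π = 2

/-- `A_n = A ∩ z^{2n} O(𝔻)`. -/
def An (A : Subalgebra ℂ (𝔻 → ℂ)) (n : ℕ) : Submodule ℂ (𝔻 → ℂ) :=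
  A.toSubmodule ⊓ zO (2 * n)

/-- `E_n = A_n / A_{n+1}`. -/
abbrev En (A : Subalgebra ℂ (𝔻 → ℂ)) (n : ℕ) :=
  An A n ⧸ ((An A (n + 1)).comap (An A n).subtype)

lemma eventually_mem_disk : ∀ᶠ z in nhds (0 : ℂ), z ∈ 𝔻 :=
  Metric.isOpen_ball.mem_nhds zero_mem_disk

/-- The derivative `der` may be computed with any holomorphic extension. -/
lemma der_eq {f : 𝔻 → ℂ} {F : ℂ → ℂ} (hF : DifferentiableOn ℂ F 𝔻) (hf : ∀ z : 𝔻, f z = F z)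
    (j : ℕ) : der j 0 f = iteratedDeriv j F 0 := by
  have h : IsHolo f := ⟨F, hF, hf⟩
  rw [der, dif_pos h]
  apply Filter.EventuallyEq.iteratedDeriv_eq
  filter_upwards [eventually_mem_disk] with z hz
  rw [← h.choose_spec.2 ⟨z, hz⟩, hf ⟨z, hz⟩]

lemma analyticAt_of_disk {F : ℂ → ℂ} (hF : DifferentiableOn ℂ F 𝔻) : AnalyticAt ℂ F 0 :=
  hF.analyticAt eventually_mem_disk

lemma taylorCoeff_sub {f g : 𝔻 → ℂ} (hf : IsHolo f) (hg : IsHolo g) (k : ℕ) :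
    taylorCoeff k (f - g) = taylorCoeff k f - taylorCoeff k g := by
  obtain ⟨F, hF, hf⟩ := hf
  obtain ⟨G, hG, hg⟩ := hg
  have hfg : ∀ z : 𝔻, (f - g) z = (F - G) z := fun z => by simp [hf, hg]
  rw [taylorCoeff, taylorCoeff, taylorCoeff, der_eq hF hf, der_eq hG hg,
    der_eq (hF.sub hG) hfg,
    iteratedDeriv_sub (analyticAt_of_disk hF).contDiffAt (analyticAt_of_disk hG).contDiffAt,
    sub_div]

lemma iteratedDeriv_pow_mul (k : ℕ) : ∀ {G : ℂ → ℂ}, AnalyticAt ℂ G 0 →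
    iteratedDeriv k (fun z => z ^ k * G z) 0 = (k.factorial : ℂ) * G 0 := by
  induction k with
  | zero => intro G _; simp
  | succ k ih =>
    intro G hG
    rw [iteratedDeriv_succ']
    have h1 : deriv (fun z => z ^ (k + 1) * G z) =ᶠ[nhds 0]
        fun z => z ^ k * (((k : ℂ) + 1) * G z + z * deriv G z) := by
      filter_upwards [hG.eventually_analyticAt] with z hz
      have hd := ((hasDerivAt_pow (k + 1) z).mul hz.differentiableAt.hasDerivAt).deriv
      refine hd.trans ?_
      push_cast
      ring
    have h2 : AnalyticAt ℂ (fun z => ((k : ℂ) + 1) * G z + z * deriv G z) 0 :=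
      (analyticAt_const.mul hG).add (analyticAt_id.mul hG.deriv)
    rw [h1.iteratedDeriv_eq, ih h2, Nat.factorial_succ]
    push_cast
    ring

lemma taylorCoeff_zpow_mul {g : 𝔻 → ℂ} (hg : IsHolo g) (k : ℕ) :
    taylorCoeff k (zfun ^ k * g) = g d0 := by
  obtain ⟨G, hG, hg⟩ := hg
  have hd : DifferentiableOn ℂ (fun z => z ^ k * G z) 𝔻 :=
    (differentiableOn_id.pow k).mul hG
  rw [taylorCoeff, der_eq hd (fun z => by simp [zfun, hg]),
    iteratedDeriv_pow_mul k (analyticAt_of_disk hG), hg d0]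
  exact mul_div_cancel_left₀ _ (by exact_mod_cast k.factorial_ne_zero)

lemma exists_eq_zfun_mul {g : 𝔻 → ℂ} (hg : IsHolo g) (h0 : g d0 = 0) :
    ∃ q, IsHolo q ∧ g = zfun * q := by
  obtain ⟨G, hG, hg⟩ := hg
  have hG0 : G 0 = 0 := (hg d0).symm.trans h0
  refine ⟨fun z => dslope G 0 z, ⟨dslope G 0,
    (Complex.differentiableOn_dslope eventually_mem_disk).2 hG, fun _ => rfl⟩, ?_⟩
  ext z
  have := sub_smul_dslope G 0 (z : ℂ)
  simp only [sub_zero, hG0, smul_eq_mul] at this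
  simp [zfun, hg, this]

lemma isHolo_zfun : IsHolo zfun := ⟨id, differentiableOn_id, fun _ => rfl⟩

lemma mem_zO_succ {f : 𝔻 → ℂ} {k : ℕ} (hf : f ∈ zO k) (h0 : taylorCoeff k f = 0) :
    f ∈ zO (k + 1) := by
  obtain ⟨g, hg, rfl⟩ := hf
  rw [taylorCoeff_zpow_mul hg] at h0
  obtain ⟨q, hq, rfl⟩ := exists_eq_zfun_mul hg h0
  exact ⟨q, hq, by ring⟩

lemma taylorCoeff_of_mem_zO_succ {f : 𝔻 → ℂ} {k : ℕ} (hf : f ∈ zO (k + 1)) :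
    taylorCoeff k f = 0 := by
  obtain ⟨g, hg, rfl⟩ := hf
  rw [pow_succ, mul_assoc, taylorCoeff_zpow_mul (HolDisk.mul_mem isHolo_zfun hg)]
  simp [zfun, d0]

lemma mem_zO_zero {f : 𝔻 → ℂ} (hf : IsHolo f) : f ∈ zO 0 := ⟨f, hf, by simp⟩

lemma IsPrimitive.eq_sq_mul {A : Subalgebra ℂ (𝔻 → ℂ)} {π : 𝔻 → ℂ} (hA : A ≤ HolDisk)
    (hπ : IsPrimitive A π) : ∃ q, IsHolo q ∧ q d0 = 1 ∧ π = zfun ^ 2 * q := by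
  obtain ⟨hm, h0, h1, h2⟩ := hπ
  have hz0 := mem_zO_zero (hA hm)
  have ht0 : taylorCoeff 0 π = 0 := by
    have := taylorCoeff_zpow_mul (hA hm) 0
    rwa [pow_zero, one_mul, h0] at this
  have hz2 := mem_zO_succ (mem_zO_succ hz0 ht0) (by simp [taylorCoeff, h1])
  obtain ⟨q, hq, rfl⟩ := hz2
  refine ⟨q, hq, ?_, rfl⟩
  rw [← taylorCoeff_zpow_mul hq 2, taylorCoeff, h2]
  norm_num [Nat.factorial]

/-- Cancellation of leading terms: if a subspace `W` contains `z^m O(𝔻)` and an element of each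
exact order of vanishing, then it contains all of `O(𝔻)`. -/
lemma zO_zero_le {W : Submodule ℂ (𝔻 → ℂ)} {m : ℕ} (hm : zO m ≤ W)
    (hW : ∀ k, ∃ q, IsHolo q ∧ q d0 = 1 ∧ zfun ^ k * q ∈ W) : zO 0 ≤ W := by
  induction m with
  | zero => exact hm
  | succ k ih =>
    refine ih ?_
    rintro _ ⟨g, hg, rfl⟩
    obtain ⟨q, hq, hq1, hqW⟩ := hW k
    have hr : IsHolo (g - g d0 • q) := HolDisk.sub_mem hg (HolDisk.smul_mem hq _)
    obtain ⟨s, hs, hs'⟩ := exists_eq_zfun_mul hr (by simp [hq1])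
    have hW' : zfun ^ k * (g - g d0 • q) ∈ W := hm ⟨s, hs, by rw [hs']; ring⟩
    have := W.add_mem hW' (W.smul_mem (g d0) hqW)
    convert this using 1
    rw [mul_sub, mul_smul_comm, sub_add_cancel]

/-- If `A` contains some `z^m O(𝔻)` and elements of orders `2` and `2j + 1`, then all gaps of its
semigroup of orders are among the `j` odd numbers below `2j + 1`, so the codimension is at most
`j`. -/
lemma cod_le_of_odd {A : Subalgebra ℂ (𝔻 → ℂ)} {m j : ℕ}
    (hm : (zO m : Set (𝔻 → ℂ)) ⊆ (A : Set (𝔻 → ℂ)))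
    {q g : 𝔻 → ℂ} (hq : IsHolo q) (hq1 : q d0 = 1) (hqA : zfun ^ 2 * q ∈ A)
    (hg : IsHolo g) (hg1 : g d0 = 1) (hgA : zfun ^ (2 * j + 1) * g ∈ A) : cod A ≤ j := by
  let v : Fin j → HolDisk.toSubmodule := fun i =>
    ⟨zfun ^ (2 * (i : ℕ) + 1), HolDisk.pow_mem isHolo_zfun _⟩
  let Q := A.toSubmodule.comap HolDisk.toSubmodule.subtype
  let S : Submodule ℂ HolDisk.toSubmodule := Submodule.span ℂ (Set.range v)
  have hpow : ∀ i, zfun ^ (2 * i) * q ^ i ∈ A := fun i => by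
    have := A.pow_mem hqA i
    rwa [mul_pow, ← pow_mul] at this
  have hle : zO 0 ≤ A.toSubmodule ⊔ S.map HolDisk.toSubmodule.subtype := by
    refine zO_zero_le (m := m) (fun f hf => Submodule.mem_sup_left (hm hf)) fun k => ?_
    obtain ⟨i, rfl | rfl⟩ := k.even_or_odd'
    · exact ⟨q ^ i, HolDisk.pow_mem hq _, by simp [hq1], Submodule.mem_sup_left (hpow i)⟩
    · by_cases hij : i < j
      · refine ⟨1, HolDisk.one_mem, rfl, Submodule.mem_sup_right ?_⟩
        rw [mul_one]
        exact ⟨v ⟨i, hij⟩, Submodule.subset_span ⟨_, rfl⟩, rfl⟩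
      · obtain ⟨l, rfl⟩ := Nat.exists_eq_add_of_le (not_lt.1 hij)
        refine ⟨q ^ l * g, HolDisk.mul_mem (HolDisk.pow_mem hq _) hg, by simp [hq1, hg1],
          Submodule.mem_sup_left ?_⟩
        have := A.mul_mem (hpow l) hgA
        rw [Subalgebra.mem_toSubmodule]
        convert this using 1
        ring
  have htop : Submodule.span ℂ (Set.range (Q.mkQ ∘ v)) = ⊤ := by
    rw [Set.range_comp, Submodule.span_image, eq_top_iff]
    rintro x -
    obtain ⟨f, rfl⟩ := Q.mkQ_surjective x
    obtain ⟨a, ha, _, ⟨s, hs, rfl⟩, has⟩ := Submodule.mem_sup.1 (hle (mem_zO_zero f.2))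
    refine ⟨s, hs, ?_⟩
    rw [← sub_eq_zero, ← map_sub, Submodule.mkQ_apply, Submodule.Quotient.mk_eq_zero]
    have : ((s - f : HolDisk.toSubmodule) : 𝔻 → ℂ) = -a := by
      rw [Submodule.coe_sub, ← has]; simp
    change ((s - f : HolDisk.toSubmodule) : 𝔻 → ℂ) ∈ A.toSubmodule
    rw [this]
    exact neg_mem ha
  have hfin := finrank_range_le_card (R := ℂ) (Q.mkQ ∘ v)
  rw [Set.finrank, htop, finrank_top, Fintype.card_fin] at hfin
  exact hfin

/-- If `π` and `χ` are primitives of a simple cusp algebra of codimension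
`n + 1` whose even Taylor coefficients `π̂(2k), χ̂(2k)` (for `2 ≤ k ≤ n`)
vanish, then `π̂(k) = χ̂(k)` for all `0 ≤ k ≤ 2n + 1`, i.e. `π - χ` vanishes to
order at least `2n + 2` at `0`. -/
theorem stmt_11 (A : Subalgebra ℂ (𝔻 → ℂ)) (n : ℕ)
    (hA : IsSimpleCuspAlgebra A) (hcod : cod A = n + 1)
    (π χ : 𝔻 → ℂ) (hπ : IsPrimitive A π) (hχ : IsPrimitive A χ)
    (hπe : ∀ k, 2 ≤ k → k ≤ n → taylorCoeff (2 * k) π = 0)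
    (hχe : ∀ k, 2 ≤ k → k ≤ n → taylorCoeff (2 * k) χ = 0) :
    ∀ k ≤ 2 * n + 1, taylorCoeff k π = taylorCoeff k χ := by
  obtain ⟨⟨hle, -, m, -, hm⟩, -⟩ := hA
  have hπH : IsHolo π := hle hπ.1
  have hχH : IsHolo χ := hle hχ.1
  have hmem : π - χ ∈ A := A.sub_mem hπ.1 hχ.1
  obtain ⟨q, hq, hq1, hπq⟩ := hπ.eq_sq_mul hle
  obtain ⟨p, hp, hp1, hχp⟩ := hχ.eq_sq_mul hle
  have key : ∀ k ≤ 2 * n + 2, π - χ ∈ zO k := by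
    intro k
    induction k with
    | zero => exact fun _ => mem_zO_zero (hle hmem)
    | succ k ih =>
      intro hk
      have hz := ih (by omega)
      refine mem_zO_succ hz ?_
      obtain ⟨i, rfl | rfl⟩ := k.even_or_odd'
      · rw [taylorCoeff_sub hπH hχH]
        rcases Nat.lt_or_ge i 2 with hi | hi
        · interval_cases i
          · have h1 := taylorCoeff_zpow_mul hπH 0
            have h2 := taylorCoeff_zpow_mul hχH 0
            rw [pow_zero, one_mul] at h1 h2
            rw [mul_zero, h1, h2, hπ.2.1, hχ.2.1, sub_zero]
          · simp [taylorCoeff, hπ.2.2.2, hχ.2.2.2]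
        · rw [hπe i hi (by omega), hχe i hi (by omega), sub_zero]
      · by_contra hne
        obtain ⟨g, hg, hfg⟩ := hz
        rw [hfg, taylorCoeff_zpow_mul hg] at hne
        -- Normalising the leading coefficient gives an element of `A` of odd order `2i + 1`.
        have hcon := cod_le_of_odd hm hq hq1 (hπq ▸ hπ.1)
          (g := (g d0)⁻¹ • g) (j := i) (HolDisk.smul_mem hg _) (by simp [hne]) (by
            rw [mul_smul_comm, ← hfg]; exact A.smul_mem hmem _)
        omega
  intro k hk
  have := taylorCoeff_of_mem_zO_succ (key (k + 1) (by omega))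
  rwa [taylorCoeff_sub hπH hχH, sub_eq_zero] at this

end
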